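/- arXiv:2511.13844 — 3 statements merged into one kernel-verified Lean document; each statement's English description precedes it below -/
import Mathlib

section
/- Let n ≥ 1, σ > 0, and set p_σ = (1 − e^{−1/(2σ)})/2. Then for all bitstrings x, y ∈ {0,1}^n, the Gaussian kernel satisfies the Fourier–Walsh expansion exp(−‖x−y‖₂²/(2σ)) = Σ_{S ⊆ [n]} (1−p_σ)^{n−|S|} · p_σ^{|S|} · Π_{k∈S} (−1)^{x_k + y_k}. -/
open Real Finset

/-- The expansion for a single bit: agreeing bits contribute `1`, differing bits `1 - 2 p`. -/
lemma exp_neg_sq_sub_div_eq_bit (σ : ℝ) (a b : Fin 2) :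
    Real.exp (-((a : ℝ) - (b : ℝ)) ^ 2 / (2 * σ)) =
      (1 - Real.exp (-1 / (2 * σ))) / 2 * (-1 : ℝ) ^ ((a : ℕ) + (b : ℕ)) +
        (1 - (1 - Real.exp (-1 / (2 * σ))) / 2) := by
  fin_cases a <;> fin_cases b <;> norm_num <;> ring

/-- Expanding a product of `p * f k + q` over all subsets of a finite type. -/
lemma prod_const_mul_add_const {ι R : Type*} [Fintype ι] [CommSemiring R]
    (p q : R) (f : ι → R) :
    ∏ k, (p * f k + q) =
      ∑ S : Finset ι, q ^ (Fintype.card ι - S.card) * p ^ S.card * ∏ k ∈ S, f k := by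
  classical
  rw [Finset.prod_add, Finset.powerset_univ]
  refine Finset.sum_congr rfl fun S _ => ?_
  rw [Finset.prod_mul_distrib, Finset.prod_const, Finset.prod_const,
    ← Finset.compl_eq_univ_sdiff, Finset.card_compl]
  ring

/-- **Fourier–Walsh expansion of the Gaussian kernel on bitstrings.**
For `n ≥ 1`, `σ > 0`, and `p_σ = (1 − e^{−1/(2σ)})/2`, every pair of bitstrings
`x, y : Fin n → Fin 2` satisfies
`exp(−‖x−y‖₂²/(2σ)) = Σ_{S ⊆ [n]} (1−p_σ)^{n−|S|} p_σ^{|S|} Π_{k∈S} (−1)^{x_k+y_k}`. -/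
theorem gaussian_kernel_fourier_walsh
    (n : ℕ) (hn : 1 ≤ n) (σ : ℝ) (hσ : 0 < σ)
    (pσ : ℝ) (hpσ : pσ = (1 - Real.exp (-1 / (2 * σ))) / 2)
    (x y : Fin n → Fin 2) :
    Real.exp (-(∑ k, ((x k : ℝ) - (y k : ℝ)) ^ 2) / (2 * σ)) =
      ∑ S : Finset (Fin n),
        (1 - pσ) ^ (n - S.card) * pσ ^ S.card *
          ∏ k ∈ S, (-1 : ℝ) ^ ((x k : ℕ) + (y k : ℕ)) := by
  have hprod := prod_const_mul_add_const pσ (1 - pσ)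
    fun k => (-1 : ℝ) ^ ((x k : ℕ) + (y k : ℕ))
  rw [Fintype.card_fin] at hprod
  rw [← hprod, ← Finset.sum_neg_distrib, Finset.sum_div, Real.exp_sum]
  refine Finset.prod_congr rfl fun k _ => ?_
  rw [hpσ, exp_neg_sq_sub_div_eq_bit]
end

section
/- Let n ≥ 1, σ > 0, and set p_σ = (1 − e^{−1/(2σ)})/2. For any two probability distributions p, q on {0,1}^n, the squared maximum mean discrepancy with Gaussian kernel satisfies MMD²_σ(p,q) = Σ_{S ⊆ [n]} (1−p_σ)^{n−|S|} · p_σ^{|S|} · (⟨Z_S⟩_p − ⟨Z_S⟩_q)². -/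
open Real Finset

/-- The Gaussian kernel with bandwidth `σ` on bitstrings of length `n`. -/
noncomputable def gaussKernel (n : ℕ) (σ : ℝ) (x y : Fin n → Fin 2) : ℝ :=
  Real.exp (-(∑ k, ((x k : ℝ) - (y k : ℝ)) ^ 2) / (2 * σ))

/-- The squared maximum mean discrepancy between two distributions `p, q` on
bitstrings, with respect to a kernel `K`. -/
noncomputable def MMD2 (n : ℕ) (K : (Fin n → Fin 2) → (Fin n → Fin 2) → ℝ)
    (p q : (Fin n → Fin 2) → ℝ) : ℝ :=
  (∑ x, ∑ y, p x * p y * K x y) - 2 * (∑ x, ∑ y, p x * q y * K x y) +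
    (∑ x, ∑ y, q x * q y * K x y)

/-- The expectation value of the Pauli-Z string indexed by `S ⊆ [n]` under a
probability distribution `p` on bitstrings. -/
noncomputable def zExpval (n : ℕ) (S : Finset (Fin n)) (p : (Fin n → Fin 2) → ℝ) : ℝ :=
  ∑ x, p x * ∏ k ∈ S, (-1 : ℝ) ^ (x k : ℕ)

/-- The Gaussian kernel is diagonal in the basis of parity functions. -/
theorem gaussKernel_eq_sum_parity (n : ℕ) (σ pσ : ℝ)
    (hpσ : pσ = (1 - Real.exp (-1 / (2 * σ))) / 2) (x y : Fin n → Fin 2) :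
    gaussKernel n σ x y =
      ∑ S : Finset (Fin n), (1 - pσ) ^ (n - S.card) * pσ ^ S.card *
        ((∏ k ∈ S, (-1 : ℝ) ^ (x k : ℕ)) * ∏ k ∈ S, (-1 : ℝ) ^ (y k : ℕ)) := by
  have hfactor : ∀ a b : Fin 2, Real.exp (-((a : ℝ) - (b : ℝ)) ^ 2 / (2 * σ)) =
      pσ * ((-1 : ℝ) ^ (a : ℕ) * (-1 : ℝ) ^ (b : ℕ)) + (1 - pσ) := by
    intro a b
    fin_cases a <;> fin_cases b <;> simp [hpσ] <;> ring
  have hprod : gaussKernel n σ x y =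
      ∏ k, (pσ * ((-1 : ℝ) ^ (x k : ℕ) * (-1 : ℝ) ^ (y k : ℕ)) + (1 - pσ)) := by
    simp only [gaussKernel, ← hfactor, ← Real.exp_sum, ← Finset.sum_div, Finset.sum_neg_distrib]
  rw [hprod, Finset.prod_add, Finset.powerset_univ]
  refine Finset.sum_congr rfl fun S _ => ?_
  rw [Finset.prod_mul_distrib, Finset.prod_mul_distrib, Finset.prod_const, Finset.prod_const,
    Finset.card_univ_sdiff, Fintype.card_fin]
  ring

/-- The bilinear form of the Gaussian kernel, in terms of Pauli-Z expectation values. -/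
theorem sum_mul_gaussKernel (n : ℕ) (σ pσ : ℝ)
    (hpσ : pσ = (1 - Real.exp (-1 / (2 * σ))) / 2) (f g : (Fin n → Fin 2) → ℝ) :
    ∑ x, ∑ y, f x * g y * gaussKernel n σ x y =
      ∑ S : Finset (Fin n), (1 - pσ) ^ (n - S.card) * pσ ^ S.card *
        (zExpval n S f * zExpval n S g) := by
  simp only [gaussKernel_eq_sum_parity n σ pσ hpσ, zExpval, Finset.sum_mul_sum]
  simp only [Finset.mul_sum]
  refine (Finset.sum_congr rfl fun x _ => Finset.sum_comm).trans (Finset.sum_comm.trans ?_)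
  refine Finset.sum_congr rfl fun S _ => ?_
  refine Finset.sum_congr rfl fun x _ => ?_
  refine Finset.sum_congr rfl fun y _ => ?_
  ring

/-- **Expectation-value form of the Gaussian `MMD²` loss.**
For `n ≥ 1`, `σ > 0`, `p_σ = (1 − e^{−1/(2σ)})/2`, and probability distributions
`p, q` on `{0,1}^n`,
`MMD²_σ(p,q) = Σ_{S ⊆ [n]} (1−p_σ)^{n−|S|} p_σ^{|S|} (⟨Z_S⟩_p − ⟨Z_S⟩_q)²`. -/
theorem mmd2_eq_sum_z_expvals
    (n : ℕ) (hn : 1 ≤ n) (σ : ℝ) (hσ : 0 < σ)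
    (pσ : ℝ) (hpσ : pσ = (1 - Real.exp (-1 / (2 * σ))) / 2)
    (p q : (Fin n → Fin 2) → ℝ)
    (hp0 : ∀ x, 0 ≤ p x) (hp1 : ∑ x, p x = 1)
    (hq0 : ∀ x, 0 ≤ q x) (hq1 : ∑ x, q x = 1) :
    MMD2 n (gaussKernel n σ) p q =
      ∑ S : Finset (Fin n),
        (1 - pσ) ^ (n - S.card) * pσ ^ S.card *
          (zExpval n S p - zExpval n S q) ^ 2 := by
  rw [MMD2, sum_mul_gaussKernel n σ pσ hpσ, sum_mul_gaussKernel n σ pσ hpσ,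
    sum_mul_gaussKernel n σ pσ hpσ, Finset.mul_sum, ← Finset.sum_sub_distrib,
    ← Finset.sum_add_distrib]
  refine Finset.sum_congr rfl fun S _ => ?_
  ring
end

section
/- Let n ≥ 1 and let A be a 2n × 2n complex skew-symmetric matrix (Aᵀ = −A). Then there exist a unitary 2n × 2n matrix U and nonnegative reals σ_1, …, σ_n such that Uᵀ A U is block diagonal with n consecutive 2×2 blocks of the form [[0, σ_i], [−σ_i, 0]]. -/
open Matrix

/-- A conjugate-linear operator that is skew with respect to the inner product has, unless it is
zero, an orthonormal pair `u`, `v` with `S u = r v` and `S v = -r u` for some real `r ≥ 0`. -/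
theorem exists_orthonormal_pair_of_skew {E : Type*} [NormedAddCommGroup E] [InnerProductSpace ℂ E]
    [FiniteDimensional ℂ E] (S : E →ₗ⋆[ℂ] E) (hS : ∀ x y, inner ℂ (S x) y = -inner ℂ (S y) x)
    (h0 : S ≠ 0) :
    ∃ (u v : E) (r : ℝ), ‖u‖ = 1 ∧ ‖v‖ = 1 ∧ inner ℂ u v = 0 ∧ 0 ≤ r ∧
      S u = (r : ℂ) • v ∧ S v = -((r : ℂ) • u) := by
  let T : E →ₗ[ℂ] E := S.comp S
  have hT : T.IsSymmetric := fun x y ↦ by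
    change inner ℂ (S (S x)) y = inner ℂ x (S (S y))
    rw [hS, ← inner_conj_symm x, hS (S y) x, map_neg, inner_conj_symm]
  obtain ⟨i, hi⟩ : ∃ i, S (hT.eigenvectorBasis rfl i) ≠ 0 := by
    by_contra! h
    refine h0 (LinearMap.ext fun x ↦ ?_)
    rw [← (hT.eigenvectorBasis rfl).sum_repr x]
    simp [h]
  set u := hT.eigenvectorBasis rfl i
  have hTu : S (S u) = (hT.eigenvalues rfl i : ℂ) • u := hT.apply_eigenvectorBasis rfl i
  have hu1 : ‖u‖ = 1 := (hT.eigenvectorBasis rfl).orthonormal.1 i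
  have hr : ‖S u‖ ≠ 0 := norm_ne_zero_iff.2 hi
  have hrC : (‖S u‖ : ℂ) ≠ 0 := by exact_mod_cast hr
  have hev : (hT.eigenvalues rfl i : ℂ) = -(‖S u‖ : ℂ) ^ 2 := by
    have h := hS (S u) u
    rw [hTu, inner_smul_left, inner_self_eq_norm_sq_to_K, inner_self_eq_norm_sq_to_K, hu1] at h
    simpa using h
  have hself : inner ℂ (S u) u = 0 := self_eq_neg.1 (hS u u)
  refine ⟨u, (‖S u‖ : ℂ)⁻¹ • S u, ‖S u‖, hu1, ?_, ?_, norm_nonneg _, ?_, ?_⟩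
  · rw [norm_smul, norm_inv, Complex.norm_real, norm_norm, inv_mul_cancel₀ hr]
  · rw [inner_smul_right, ← inner_conj_symm, hself, map_zero, mul_zero]
  · rw [smul_smul, mul_inv_cancel₀ hrC, one_smul]
  · rw [map_smulₛₗ, hTu, hev, smul_smul, ← neg_smul]
    congr 1
    simp only [map_inv₀, Complex.conj_ofReal]
    field_simp

/-- Canonical form of a skew conjugate-linear operator in an orthonormal basis `u i`, `v i`. -/
theorem exists_orthonormal_canonical_form_of_skew (n : ℕ) :
    ∀ {E : Type*} [NormedAddCommGroup E] [InnerProductSpace ℂ E] [FiniteDimensional ℂ E]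
      (_ : Module.finrank ℂ E = 2 * n) (S : E →ₗ⋆[ℂ] E)
      (_ : ∀ x y, inner ℂ (S x) y = -inner ℂ (S y) x),
      ∃ (u v : Fin n → E) (σ : Fin n → ℝ), Orthonormal ℂ u ∧ Orthonormal ℂ v ∧
        (∀ i j, inner ℂ (u i) (v j) = 0) ∧ (∀ i, 0 ≤ σ i) ∧
        (∀ i, S (u i) = (σ i : ℂ) • v i) ∧ (∀ i, S (v i) = -((σ i : ℂ) • u i)) := by
  induction n with
  | zero =>
    intro E _ _ _ _ S _
    exact ⟨Fin.elim0, Fin.elim0, Fin.elim0, ⟨fun i ↦ i.elim0, fun i ↦ i.elim0⟩,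
      ⟨fun i ↦ i.elim0, fun i ↦ i.elim0⟩, fun i ↦ i.elim0, fun i ↦ i.elim0, fun i ↦ i.elim0,
      fun i ↦ i.elim0⟩
  | succ n ih =>
    intro E _ _ _ hE S hS
    by_cases h0 : S = 0
    · let b := (stdOrthonormalBasis ℂ E).reindex (finCongr hE)
      let e : Fin (n + 1) → Fin (2 * (n + 1)) := fun i ↦ ⟨2 * i, by omega⟩
      let o : Fin (n + 1) → Fin (2 * (n + 1)) := fun i ↦ ⟨2 * i + 1, by omega⟩
      refine ⟨b ∘ e, b ∘ o, 0, b.orthonormal.comp e fun i j h ↦ ?_,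
        b.orthonormal.comp o fun i j h ↦ ?_, fun i j ↦ b.orthonormal.2 fun h ↦ ?_,
        fun _ ↦ le_rfl, fun _ ↦ by simp [h0], fun _ ↦ by simp [h0]⟩
      all_goals simp only [e, o, Fin.mk.injEq] at h; omega
    · obtain ⟨u₀, v₀, r, hu, hv, huv, hr, hSu, hSv⟩ := exists_orthonormal_pair_of_skew S hS h0
      have hvu : inner ℂ v₀ u₀ = 0 := inner_eq_zero_symm.1 huv
      have hon : Orthonormal ℂ ![u₀, v₀] := by
        constructor
        · simp [Fin.forall_fin_two, hu, hv]
        · intro i j hij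
          fin_cases i <;> fin_cases j <;> simp_all
      let W := (Submodule.span ℂ (Set.range ![u₀, v₀]))ᗮ
      have hmem (x : E) : x ∈ W ↔ inner ℂ u₀ x = 0 ∧ inner ℂ v₀ x = 0 := by
        simp [W, Matrix.range_cons, Submodule.span_insert, ← Submodule.inf_orthogonal,
          Submodule.mem_orthogonal_singleton_iff_inner_right, and_comm]
      have hW : Module.finrank ℂ W = 2 * n := by
        have h := Submodule.finrank_add_finrank_orthogonal (Submodule.span ℂ (Set.range ![u₀, v₀]))
        rw [finrank_span_eq_card hon.linearIndependent, hE, Fintype.card_fin] at h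
        change 2 + Module.finrank ℂ W = _ at h
        omega
      have hSW (x : W) : S x ∈ W := by
        obtain ⟨h1, h2⟩ := (hmem x).1 x.2
        refine (hmem _).2 ⟨?_, ?_⟩ <;> refine inner_eq_zero_symm.1 ?_ <;> rw [hS]
        · simp [hSu, h2]
        · rw [hSv, inner_neg_left, inner_smul_left, h1, mul_zero, neg_zero, neg_zero]
      let S' : W →ₗ⋆[ℂ] W := (S.comp W.subtype).codRestrict W hSW
      obtain ⟨u, v, σ, huo, hvo, huvo, hσ, hu', hv'⟩ := ih hW S' fun x y ↦ hS x y
      have hcons {a : E} (ha : ‖a‖ = 1) {w : Fin n → W} (hw : Orthonormal ℂ w)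
          (haw : ∀ i, inner ℂ a (w i : E) = 0) :
          Orthonormal ℂ (Fin.cons a fun i ↦ (w i : E) : Fin (n + 1) → E) := by
        rw [orthonormal_iff_ite] at hw ⊢
        intro i j
        refine Fin.cases ?_ (fun i ↦ ?_) i <;> refine Fin.cases ?_ (fun j ↦ ?_) j
        · simp [inner_self_eq_norm_sq_to_K, ha]
        · simp [haw, (Fin.succ_ne_zero j).symm]
        · simp [inner_eq_zero_symm.1 (haw i)]
        · simpa using hw i j
      refine ⟨Fin.cons u₀ fun i ↦ (u i : E), Fin.cons v₀ fun i ↦ (v i : E), Fin.cons r σ,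
        hcons hu huo fun i ↦ ((hmem _).1 (u i).2).1, hcons hv hvo fun i ↦ ((hmem _).1 (v i).2).2,
        fun i j ↦ ?_, fun i ↦ ?_, fun i ↦ ?_, fun i ↦ ?_⟩
      · refine Fin.cases ?_ (fun i ↦ ?_) i <;> refine Fin.cases ?_ (fun j ↦ ?_) j
        · simpa using huv
        · simpa using ((hmem _).1 (v j).2).1
        · simpa using inner_eq_zero_symm.1 ((hmem _).1 (u i).2).2
        · simpa using huvo i j
      · exact Fin.cases hr hσ i
      · exact Fin.cases hSu (fun i ↦ congrArg Subtype.val (hu' i)) i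
      · exact Fin.cases hSv (fun i ↦ congrArg Subtype.val (hv' i)) i

/-- The conjugate-linear operator `x ↦ -conj (A x)` on Euclidean space. -/
noncomputable def Matrix.toConjLinear {m : Type*} [Fintype m] (A : Matrix m m ℂ) :
    EuclideanSpace ℂ m →ₗ⋆[ℂ] EuclideanSpace ℂ m where
  toFun x := WithLp.toLp 2 (-star (A *ᵥ x.ofLp))
  map_add' x y := by ext i; simp [Matrix.mulVec_add]; ring
  map_smul' c x := by ext i; simp [Matrix.mulVec_smul]

theorem Matrix.inner_toConjLinear {m : Type*} [Fintype m] {A : Matrix m m ℂ} (hA : Aᵀ = -A)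
    (x y : EuclideanSpace ℂ m) :
    inner ℂ (A.toConjLinear x) y = x.ofLp ⬝ᵥ A *ᵥ y.ofLp := by
  rw [EuclideanSpace.inner_eq_star_dotProduct, Matrix.dotProduct_mulVec, ← Matrix.mulVec_transpose,
    hA, dotProduct_comm]
  simp [Matrix.toConjLinear, Matrix.neg_mulVec]

theorem Matrix.inner_toConjLinear_skew {m : Type*} [Fintype m] {A : Matrix m m ℂ} (hA : Aᵀ = -A)
    (x y : EuclideanSpace ℂ m) :
    inner ℂ (A.toConjLinear x) y = -inner ℂ (A.toConjLinear y) x := by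
  rw [Matrix.inner_toConjLinear hA, Matrix.inner_toConjLinear hA, Matrix.dotProduct_mulVec,
    ← Matrix.mulVec_transpose, hA, dotProduct_comm, Matrix.neg_mulVec, dotProduct_neg]

/-- **Youla canonical form of a complex skew-symmetric matrix under unitary
congruence.** If `A` is a `2n × 2n` complex matrix with `Aᵀ = −A`, then there
are a unitary `U` and nonnegative reals `σ_1, …, σ_n` such that `Uᵀ A U` is
block diagonal with `n` consecutive `2×2` blocks `[[0, σ_i], [−σ_i, 0]]`. -/
theorem youla_decomposition (n : ℕ) (hn : 1 ≤ n)
    (A : Matrix (Fin (2 * n)) (Fin (2 * n)) ℂ) (hA : Aᵀ = -A) :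
    ∃ (U : Matrix (Fin (2 * n)) (Fin (2 * n)) ℂ) (σ : Fin n → ℝ),
      U ∈ Matrix.unitaryGroup (Fin (2 * n)) ℂ ∧ (∀ i, 0 ≤ σ i) ∧
      Uᵀ * A * U = Matrix.of (fun (i j : Fin (2 * n)) =>
        if (i : ℕ) / 2 = (j : ℕ) / 2 then
          (if (i : ℕ) % 2 = 0 ∧ (j : ℕ) % 2 = 1 then
            ((σ ⟨(i : ℕ) / 2, by have := i.isLt; omega⟩ : ℝ) : ℂ)
          else if (i : ℕ) % 2 = 1 ∧ (j : ℕ) % 2 = 0 then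
            -((σ ⟨(i : ℕ) / 2, by have := i.isLt; omega⟩ : ℝ) : ℂ)
          else 0)
        else 0) := by
  obtain ⟨u, v, σ, hu, hv, huv, hσ, hSu, hSv⟩ :=
    exists_orthonormal_canonical_form_of_skew n (E := EuclideanSpace ℂ (Fin (2 * n))) (by simp)
      A.toConjLinear (Matrix.inner_toConjLinear_skew hA)
  rw [orthonormal_iff_ite] at hu hv
  have hvu (i j) : inner ℂ (v i) (u j) = 0 := inner_eq_zero_symm.1 (huv j i)
  let w (j : Fin (2 * n)) : EuclideanSpace ℂ (Fin (2 * n)) :=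
    if (j : ℕ) % 2 = 0 then u ⟨j / 2, by omega⟩ else v ⟨j / 2, by omega⟩
  refine ⟨Matrix.of fun i j ↦ w j i, σ, ?_, hσ, ?_⟩
  · rw [Matrix.mem_unitaryGroup_iff']
    ext i j
    have h : inner ℂ (w i) (w j) = (1 : Matrix (Fin (2 * n)) (Fin (2 * n)) ℂ) i j := by
      rcases Nat.mod_two_eq_zero_or_one i with hi | hi <;>
        rcases Nat.mod_two_eq_zero_or_one j with hj | hj <;>
        simp only [w, hi, hj, hu, hv, huv, hvu, Matrix.one_apply, Fin.ext_iff, if_true,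
          one_ne_zero, if_false] <;> grind
    rw [← h, EuclideanSpace.inner_eq_star_dotProduct, dotProduct_comm]
    rfl
  · ext i j
    have h : ((Matrix.of fun i j ↦ w j i)ᵀ * A * Matrix.of fun i j ↦ w j i) i j =
        inner ℂ (A.toConjLinear (w i)) (w j) := by
      rw [Matrix.inner_toConjLinear hA, Matrix.mul_assoc]
      rfl
    rw [h, Matrix.of_apply]
    rcases Nat.mod_two_eq_zero_or_one i with hi | hi <;>
      rcases Nat.mod_two_eq_zero_or_one j with hj | hj <;>
      simp [w, hi, hj, hu, hv, huv, hvu, hSu, hSv, inner_smul_left, neg_ite, -Complex.coe_smul]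
end
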